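/- Let R be a Noetherian local ring and M a reduced G_C-perfect R-module of G_C-dimension n such that G_C-dim_R(M^C) < ∞. Then depth_R(M) + depth_R(Tr_C(M)) = depth(R) + depth_R(Ext_R^n(M,C)) − 1. -/

import Mathlib

open CategoryTheory TensorProduct

noncomputable section

universe u

variable (R : Type u) [CommRing R]

/-- The `i`-th Ext module `Ext_R^i(M, N)`. -/
def ExtM (M N : ModuleCat.{u} R) (i : ℕ) : ModuleCat.{u} R :=
  ((Ext R (ModuleCat.{u} R) i).obj (Opposite.op M)).obj N

/-- The `i`-th Tor module `Tor_i^R(M, N)`. -/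
def TorM (M N : ModuleCat.{u} R) (i : ℕ) : ModuleCat.{u} R :=
  ((Tor (ModuleCat.{u} R) i).obj M).obj N

/-- The biduality (evaluation) map `M → Hom_R(Hom_R(M, C), C)`. -/
def bidualityMap (C M : ModuleCat.{u} R) :
    ↥M →ₗ[R] ((↥M →ₗ[R] ↥C) →ₗ[R] ↥C) :=
  (LinearMap.id : (↥M →ₗ[R] ↥C) →ₗ[R] (↥M →ₗ[R] ↥C)).flip

/-- `C` is a semidualizing `R`-module. -/
def IsSemidualizing (C : ModuleCat.{u} R) : Prop :=
  Module.Finite R ↥C ∧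
  Function.Bijective (fun r : R => (r • LinearMap.id : ↥C →ₗ[R] ↥C)) ∧
  ∀ i : ℕ, 0 < i → Subsingleton (ExtM R C C i)

/-- `M` is totally `C`-reflexive. -/
def IsTotallyCReflexive (C M : ModuleCat.{u} R) : Prop :=
  Module.Finite R ↥M ∧
  Function.Bijective (bidualityMap R C M) ∧
  (∀ i : ℕ, 0 < i → Subsingleton (ExtM R M C i)) ∧
  (∀ i : ℕ, 0 < i → Subsingleton (ExtM R (ModuleCat.of R (↥M →ₗ[R] ↥C)) C i))

/-- `G_C`-dimension of `M` is at most `n`: there is an exact sequence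
`0 → X_n → ⋯ → X_0 → M → 0` with each `X_i` totally `C`-reflexive. -/
def gcdimLE (C : ModuleCat.{u} R) : ℕ → ModuleCat.{u} R → Prop
  | 0, M => IsTotallyCReflexive R C M
  | n+1, M => ∃ (X K : ModuleCat.{u} R) (f : ↥K →ₗ[R] ↥X) (g : ↥X →ₗ[R] ↥M),
      Function.Injective f ∧ Function.Surjective g ∧
      LinearMap.ker g = LinearMap.range f ∧
      IsTotallyCReflexive R C X ∧ gcdimLE C n K

/-- The `G_C`-dimension of `M`, as an element of `ℕ∞`. -/
def gcdim (C M : ModuleCat.{u} R) : ℕ∞ :=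
  sInf ((fun n : ℕ => (n : ℕ∞)) '' {n | gcdimLE R C n M})

/-- `grade_R(M) = inf { i | Ext_R^i(M, R) ≠ 0 }`, with `grade 0 = ∞`. -/
def gradeR (M : ModuleCat.{u} R) : ℕ∞ :=
  sInf ((fun i : ℕ => (i : ℕ∞)) ''
    {i | ¬ Subsingleton (ExtM R M (ModuleCat.of R R) i)})

/-- Reduced grade of `M` with respect to `C`. -/
def rgrade (C M : ModuleCat.{u} R) : ℕ∞ :=
  sInf ((fun i : ℕ => (i : ℕ∞)) ''
    {i | 0 < i ∧ ¬ Subsingleton (ExtM R M C i)})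

/-- `M` is reduced `G_C`-perfect. -/
def IsReducedGCPerfect (C M : ModuleCat.{u} R) : Prop :=
  gcdim R C M ≠ ⊤ ∧ rgrade R C M = gcdim R C M

/-- `M` is `G_C`-perfect. -/
def IsGCPerfect (C M : ModuleCat.{u} R) : Prop :=
  gcdim R C M ≠ ⊤ ∧ gradeR R M = gcdim R C M

/-- `π : P → M` is a projective cover: `P` projective, `π` surjective with superfluous kernel. -/
def IsProjectiveCover {P M : ModuleCat.{u} R} (π : ↥P →ₗ[R] ↥M) : Prop :=
  Module.Projective R ↥P ∧ Function.Surjective π ∧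
  ∀ N : Submodule R ↥P, N ⊔ LinearMap.ker π = ⊤ → N = ⊤

/-- `P₁ →d P₀ →π M → 0` is a minimal projective presentation of `M`. -/
def IsMinimalPresentation {P1 P0 M : ModuleCat.{u} R}
    (d : ↥P1 →ₗ[R] ↥P0) (π : ↥P0 →ₗ[R] ↥M) : Prop :=
  Module.Finite R ↥P1 ∧ Module.Finite R ↥P0 ∧
  IsProjectiveCover R π ∧
  LinearMap.range d = LinearMap.ker π ∧
  Module.Projective R ↥P1 ∧
  ∀ N : Submodule R ↥P1, N ⊔ LinearMap.ker d = ⊤ → N = ⊤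

/-- `T` is (a module isomorphic to) the transpose `Tr_C(M)` of `M` with respect to `C`,
computed from a minimal projective presentation of `M`. -/
def IsTransposeC (C M T : ModuleCat.{u} R) : Prop :=
  ∃ (P1 P0 : ModuleCat.{u} R) (d : ↥P1 →ₗ[R] ↥P0) (π : ↥P0 →ₗ[R] ↥M),
    IsMinimalPresentation R d π ∧
    Nonempty (↥T ≃ₗ[R]
      ((↥P1 →ₗ[R] ↥C) ⧸ LinearMap.range (LinearMap.lcomp R ↥C d)))

/-- `T` is the usual Auslander transpose `Tr(M) = Tr_R(M)`. -/
def IsTranspose (M T : ModuleCat.{u} R) : Prop :=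
  IsTransposeC R (ModuleCat.of R R) M T

/-- `S` is (a module isomorphic to) the first syzygy `Ω N`, i.e. the kernel of a
projective cover of `N`. -/
def IsSyzygyOf (N S : ModuleCat.{u} R) : Prop :=
  ∃ (P : ModuleCat.{u} R) (π : ↥P →ₗ[R] ↥N),
    Module.Finite R ↥P ∧ IsProjectiveCover R π ∧
    Nonempty (↥S ≃ₗ[R] LinearMap.ker π)

/-- `S` is (a module isomorphic to) the `n`-th syzygy `Ωⁿ M`. -/
def IsNthSyzygy : ℕ → ModuleCat.{u} R → ModuleCat.{u} R → Prop
  | 0, M, S => Nonempty (↥S ≃ₗ[R] ↥M)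
  | n+1, M, S => ∃ K : ModuleCat.{u} R, IsNthSyzygy n M K ∧ IsSyzygyOf R K S

/-- `L` is (a module isomorphic to) `λ M = Ω Tr M`. -/
def IsLambda (M L : ModuleCat.{u} R) : Prop :=
  ∃ T : ModuleCat.{u} R, IsTranspose R M T ∧ IsSyzygyOf R T L

/-- `M` is horizontally linked, i.e. `M ≅ λλM`. -/
def IsHorizontallyLinked (M : ModuleCat.{u} R) : Prop :=
  ∃ L L2 : ModuleCat.{u} R, IsLambda R M L ∧ IsLambda R L L2 ∧
    Nonempty (↥M ≃ₗ[R] ↥L2)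

/-- `M` is stable: it has no non-zero projective direct summand. -/
def IsStable (M : ModuleCat.{u} R) : Prop :=
  ∀ (P N : ModuleCat.{u} R), Module.Projective R ↥P →
    Nonempty (↥M ≃ₗ[R] (↥P × ↥N)) → Subsingleton ↥P

/-- `N` belongs to the Auslander class `A_C`. -/
def MemAuslanderClass (C N : ModuleCat.{u} R) : Prop :=
  Function.Bijective (TensorProduct.mk R ↥N ↥C) ∧
  (∀ i : ℕ, 0 < i → Subsingleton (TorM R C N i)) ∧
  (∀ i : ℕ, 0 < i → Subsingleton
    (ExtM R C (ModuleCat.of R (↥N ⊗[R] ↥C)) i))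

/-- `R` is semiperfect: every finite `R`-module has a projective cover. -/
def IsSemiperfectRing : Prop :=
  ∀ M : ModuleCat.{u} R, Module.Finite R ↥M →
    ∃ (P : ModuleCat.{u} R) (π : ↥P →ₗ[R] ↥M),
      Module.Finite R ↥P ∧ IsProjectiveCover R π

/-- Depth over a local ring, via Ext from the residue field. -/
def rdepth [IsLocalRing R] (M : ModuleCat.{u} R) : ℕ∞ :=
  sInf ((fun i : ℕ => (i : ℕ∞)) ''
    {i | ¬ Subsingleton
      (ExtM R (ModuleCat.of R (IsLocalRing.ResidueField R)) M i)})

/-- Projective dimension at most `n`. -/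
def pdimLE : ℕ → ModuleCat.{u} R → Prop
  | 0, M => Module.Projective R ↥M
  | n+1, M => ∃ (X K : ModuleCat.{u} R) (f : ↥K →ₗ[R] ↥X) (g : ↥X →ₗ[R] ↥M),
      Function.Injective f ∧ Function.Surjective g ∧
      LinearMap.ker g = LinearMap.range f ∧
      Module.Projective R ↥X ∧ pdimLE n K

/-- Projective dimension, as an element of `ℕ∞`. -/
def pdim (M : ModuleCat.{u} R) : ℕ∞ :=
  sInf ((fun n : ℕ => (n : ℕ∞)) '' {n | pdimLE R n M})

/-- `M` is `C`-`k`-torsionless. -/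
def IsCkTorsionless (C M : ModuleCat.{u} R) (k : ℕ) : Prop :=
  k = 0 ∨ ∀ T : ModuleCat.{u} R, IsTransposeC R C M T →
    ∀ i : ℕ, 1 ≤ i → i ≤ k → Subsingleton (ExtM R T C i)

/-- `M` is a `C`-syzygy: it embeds into `P ⊗_R C` with `P` finite projective. -/
def IsCSyzygy (C M : ModuleCat.{u} R) : Prop :=
  ∃ (P : ModuleCat.{u} R), Module.Finite R ↥P ∧ Module.Projective R ↥P ∧
    ∃ f : ↥M →ₗ[R] (↥P ⊗[R] ↥C), Function.Injective f


/-- There is an exact sequence `0 → N → X_k → ⋯ → X_1 → M → 0` of finite `R`-modules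
with `Ext_R^i(X_j, C) = 0` for all `i > 0` and all `j`. -/
def ExtVanishingChain (C : ModuleCat.{u} R) : ℕ → ModuleCat.{u} R → ModuleCat.{u} R → Prop
  | 0, N, M => Nonempty (↥N ≃ₗ[R] ↥M)
  | k+1, N, M => ∃ (X K : ModuleCat.{u} R) (f : ↥K →ₗ[R] ↥X) (g : ↥X →ₗ[R] ↥M),
      Function.Injective f ∧ Function.Surjective g ∧
      LinearMap.ker g = LinearMap.range f ∧
      Module.Finite R ↥X ∧ (∀ i : ℕ, 0 < i → Subsingleton (ExtM R X C i)) ∧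
      ExtVanishingChain C k N K

/-!
Write `E = Ext^n(M, C)`. Dualizing a resolution of `M` by totally `C`-reflexive modules shows that
`E` has finite `G_C`-dimension, being built from `M^C` and the duals of the terms of the resolution,
and biduality gives `Ext^i(E, C) = 0` for `i < n`. So `E` has `G_C`-dimension at least `n`, and the
Auslander–Bridger formula yields `depth E + n ≤ depth C` and `depth M + n = depth C`. That formula
rests on the evaluation map `Ext^i(k, Hom(Y, C)) → Hom(Y, Ext^i(k, C))`, which is an isomorphism for
`i = depth C` as soon as `Ext^j(Y, C) = 0` for all `j > 0`.

Replacing `M` by its syzygy lowers `n` by one, keeps `E`, and embeds the transpose of `M` into a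
finite sum of copies of `C` with the transpose of the syzygy as cokernel. When `n = 1`, the
transpose contains `E` with a quotient of depth at least `depth C`. The bound on `depth E` then
makes the depth lemma exact at each stage, giving `depth Tr_C M = depth E + n - 1`.
-/

section Comparison

variable {R}

instance preservesLimits_linearYoneda_obj (Y : ModuleCat.{u} R) :
    Limits.PreservesLimits ((linearYoneda R (ModuleCat.{u} R)).obj Y) :=
  have : Limits.PreservesLimits ((linearYoneda R (ModuleCat.{u} R)).obj Y ⋙ forget _) :=
    (inferInstance : Limits.PreservesLimits (yoneda.obj Y))
  Limits.preservesLimits_of_reflects_of_preserves _ (forget _)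

instance preservesFiniteColimits_linearYoneda_obj_rightOp (Y : ModuleCat.{u} R) :
    Limits.PreservesFiniteColimits ((linearYoneda R (ModuleCat.{u} R)).obj Y).rightOp :=
  Limits.preservesFiniteColimits_rightOp _

lemma nonempty_extM_zero_equiv (X Y : ModuleCat.{u} R) :
    Nonempty (ExtM R X Y 0 ≃ₗ[R] Abelian.Ext.{u} X Y 0) :=
  ⟨((((linearYoneda R (ModuleCat.{u} R)).obj Y).rightOp.leftDerivedZeroIsoSelf.app
    X).unop.symm.toLinearEquiv).trans Abelian.Ext.linearEquiv₀.symm⟩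

lemma nonempty_extM_succ_equiv (X Y : ModuleCat.{u} R) (n : ℕ) :
    Nonempty (ExtM R X Y (n + 1) ≃ₗ[R] Abelian.Ext.{u} X Y (n + 1)) := by
  let P := projectiveResolution X
  let K := P.complex.linearYonedaObj R Y
  let S := K.sc' n (n + 1) (n + 1 + 1)
  let cocycleClass : LinearMap.ker S.g.hom →ₗ[R] Abelian.Ext.{u} X Y (n + 1) :=
    { toFun := fun z => P.extMk z.1 (n + 1 + 1) rfl z.2
      map_add' := fun z w => (P.add_extMk z.1 w.1 (n + 1 + 1) rfl z.2 w.2).symm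
      map_smul' := fun r z => by
        rw [RingHom.id_apply, Abelian.Ext.smul_eq_comp_mk₀]
        refine Eq.trans ?_ (P.extMk_comp_mk₀ z.1 (n + 1 + 1) rfl z.2 (r • 𝟙 Y)).symm
        have : (r • z).1 = CategoryStruct.comp (Z := Y) z.1 (r • 𝟙 Y) :=
          ((Linear.comp_smul _ _ _ _ _ _).trans (congrArg _ (Category.comp_id _))).symm
        congr 1 }
  have surjective_cocycleClass : Function.Surjective cocycleClass := fun α => by
    obtain ⟨z, hz, h⟩ := P.extMk_surjective α (n + 1 + 1) rfl
    exact ⟨⟨z, hz⟩, h⟩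
  have ker_cocycleClass :
      LinearMap.ker cocycleClass = LinearMap.range S.moduleCatToCycles := by
    ext z
    refine (P.extMk_eq_zero_iff z.1 (n + 1 + 1) rfl z.2 n rfl).trans ?_
    exact ⟨fun ⟨g, hg⟩ => ⟨g, Subtype.ext hg⟩, fun ⟨g, hg⟩ => ⟨g, congrArg Subtype.val hg⟩⟩
  let e : ExtM R X Y (n + 1) ≅ S.homology :=
    P.isoExt (n + 1) Y ≪≫ K.homologyIsoSc' n (n + 1) (n + 1 + 1) (by simp) (by simp)
  exact ⟨(e ≪≫ S.moduleCatHomologyIso).toLinearEquiv ≪≫ₗ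
    Submodule.quotEquivOfEq _ _ ker_cocycleClass.symm ≪≫ₗ
    cocycleClass.quotKerEquivOfSurjective surjective_cocycleClass⟩

lemma nonempty_extM_equiv (X Y : ModuleCat.{u} R) :
    ∀ n : ℕ, Nonempty (ExtM R X Y n ≃ₗ[R] Abelian.Ext.{u} X Y n)
  | 0 => nonempty_extM_zero_equiv X Y
  | n + 1 => nonempty_extM_succ_equiv X Y n

lemma subsingleton_extM_iff (X Y : ModuleCat.{u} R) (n : ℕ) :
    Subsingleton (ExtM R X Y n) ↔ Subsingleton (Abelian.Ext.{u} X Y n) :=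
  let ⟨e⟩ := nonempty_extM_equiv X Y n
  e.toEquiv.subsingleton_congr

end Comparison

section ShortExact

variable {R} {A B D X Y : ModuleCat.{u} R}

lemma subsingleton_ext_congr_right (e : A ≃ₗ[R] B) (i : ℕ) :
    Subsingleton (Abelian.Ext.{u} X A i) ↔ Subsingleton (Abelian.Ext.{u} X B i) :=
  ((Abelian.extFunctorObj.{u} X i).mapIso
    e.toModuleIso).addCommGroupIsoToAddEquiv.toEquiv.subsingleton_congr

lemma subsingleton_ext_congr_left (e : A ≃ₗ[R] B) (i : ℕ) :
    Subsingleton (Abelian.Ext.{u} A Y i) ↔ Subsingleton (Abelian.Ext.{u} B Y i) :=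
  (((Abelian.extFunctor.{u} i).mapIso
    e.toModuleIso.symm.op).app Y).addCommGroupIsoToAddEquiv.toEquiv.subsingleton_congr

/-- Postcomposition of Ext classes with a linear map, bilinearly. -/
def extPostcomp (X A B : ModuleCat.{u} R) (i : ℕ) :
    (A →ₗ[R] B) →ₗ[R] Abelian.Ext.{u} X A i →ₗ[R] Abelian.Ext.{u} X B i :=
  (Abelian.Ext.bilinearCompOfLinear R X A B i 0 i (add_zero i)).flip ∘ₗ
    (ModuleCat.homLinearEquiv.symm ≪≫ₗ Abelian.Ext.linearEquiv₀.symm).toLinearMap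

lemma extPostcomp_apply {i : ℕ} (h : A →ₗ[R] B) (α : Abelian.Ext.{u} X A i) :
    extPostcomp X A B i h α = α.comp (Abelian.Ext.mk₀ (ModuleCat.ofHom h)) (add_zero i) :=
  rfl

lemma extPostcomp_comp {i : ℕ} (k : B →ₗ[R] D) (h : A →ₗ[R] B) (α : Abelian.Ext.{u} X A i) :
    extPostcomp X A D i (k ∘ₗ h) α = extPostcomp X B D i k (extPostcomp X A B i h α) := by
  simp only [extPostcomp_apply]
  rw [Abelian.Ext.comp_assoc_of_second_deg_zero, Abelian.Ext.mk₀_comp_mk₀]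
  rfl

lemma extPostcomp_id {i : ℕ} (α : Abelian.Ext.{u} X A i) :
    extPostcomp X A A i LinearMap.id α = α :=
  Abelian.Ext.comp_mk₀_id α

/-- `0 → A → B → D → 0` is a short exact sequence of modules. -/
structure IsShortExact (f : A →ₗ[R] B) (g : B →ₗ[R] D) : Prop where
  injective : Function.Injective f
  exact : Function.Exact f g
  surjective : Function.Surjective g

lemma isShortExact_subtype_ker {g : B →ₗ[R] D} (hg : Function.Surjective g) :
    IsShortExact (A := ModuleCat.of R (LinearMap.ker g)) (LinearMap.ker g).subtype g :=
  ⟨Subtype.val_injective, LinearMap.exact_subtype_ker_map g, hg⟩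

namespace IsShortExact

variable {f : A →ₗ[R] B} {g : B →ₗ[R] D}

lemma shortExact (h : IsShortExact f g) :
    (ModuleCat.shortComplexOfCompEqZero f g h.exact.linearMap_comp_eq_zero).ShortExact :=
  ModuleCat.shortComplex_shortExact _ h.exact h.injective h.surjective

section Covariant

variable {i : ℕ}

lemma exists_extPostcomp_eq (h : IsShortExact f g) {β : Abelian.Ext.{u} X B i}
    (hβ : extPostcomp X B D i g β = 0) : ∃ α, extPostcomp X A B i f α = β :=
  Abelian.Ext.covariant_sequence_exact₂ X h.shortExact β hβ

lemma extPostcomp_injective (h : IsShortExact f g)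
    (hD : ∀ j < i, Subsingleton (Abelian.Ext.{u} X D j)) :
    Function.Injective (extPostcomp X A B i f) := by
  cases i with
  | zero =>
    have : Mono (ModuleCat.ofHom f) := (ModuleCat.mono_iff_injective _).2 h.injective
    exact Abelian.Ext.postcomp_mk₀_injective_of_mono X (ModuleCat.ofHom f)
  | succ i =>
    have := hD i i.lt_succ_self
    refine (injective_iff_map_eq_zero _).2 fun α hα => ?_
    obtain ⟨δ, rfl⟩ := Abelian.Ext.covariant_sequence_exact₁ X h.shortExact α hα rfl
    rw [Subsingleton.elim δ 0, Abelian.Ext.zero_comp]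

lemma subsingleton_ext_to_left (h : IsShortExact f g)
    (hB : Subsingleton (Abelian.Ext.{u} X B i))
    (hD : ∀ j < i, Subsingleton (Abelian.Ext.{u} X D j)) :
    Subsingleton (Abelian.Ext.{u} X A i) :=
  ⟨fun _ _ => h.extPostcomp_injective hD (hB.elim _ _)⟩

lemma subsingleton_ext_to_middle (h : IsShortExact f g)
    (hA : Subsingleton (Abelian.Ext.{u} X A i)) (hD : Subsingleton (Abelian.Ext.{u} X D i)) :
    Subsingleton (Abelian.Ext.{u} X B i) := by
  refine subsingleton_of_forall_eq 0 fun β => ?_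
  obtain ⟨α, rfl⟩ := h.exists_extPostcomp_eq (Subsingleton.elim (extPostcomp X B D i g β) 0)
  rw [Subsingleton.elim α 0, map_zero]

lemma subsingleton_ext_to_right (h : IsShortExact f g)
    (hB : Subsingleton (Abelian.Ext.{u} X B i))
    (hA : Subsingleton (Abelian.Ext.{u} X A (i + 1))) :
    Subsingleton (Abelian.Ext.{u} X D i) := by
  refine subsingleton_of_forall_eq 0 fun δ => ?_
  obtain ⟨β, rfl⟩ := Abelian.Ext.covariant_sequence_exact₃ X h.shortExact δ rfl
    (Subsingleton.elim _ 0)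
  rw [Subsingleton.elim β 0, Abelian.Ext.zero_comp]

end Covariant

section Contravariant

lemma subsingleton_ext_from_left (h : IsShortExact f g) {i : ℕ}
    (hB : Subsingleton (Abelian.Ext.{u} B Y i))
    (hD : Subsingleton (Abelian.Ext.{u} D Y (i + 1))) :
    Subsingleton (Abelian.Ext.{u} A Y i) := by
  refine subsingleton_of_forall_eq 0 fun α => ?_
  obtain ⟨β, rfl⟩ := Abelian.Ext.contravariant_sequence_exact₁ h.shortExact Y α (add_comm 1 i)
    (Subsingleton.elim _ 0)
  rw [Subsingleton.elim β 0, Abelian.Ext.comp_zero]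

lemma subsingleton_ext_from_right (h : IsShortExact f g) {i : ℕ}
    (hA : Subsingleton (Abelian.Ext.{u} A Y i))
    (hB : Subsingleton (Abelian.Ext.{u} B Y (i + 1))) :
    Subsingleton (Abelian.Ext.{u} D Y (i + 1)) := by
  refine subsingleton_of_forall_eq 0 fun δ => ?_
  obtain ⟨α, rfl⟩ := Abelian.Ext.contravariant_sequence_exact₃ h.shortExact Y δ
    (Subsingleton.elim _ 0) (add_comm 1 i)
  rw [Subsingleton.elim α 0, Abelian.Ext.comp_zero]

/-- The linear connecting map `Ext^i(A, Y) → Ext^{i+1}(D, Y)` of `0 → A → B → D → 0`. -/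
def connecting (h : IsShortExact f g) (Y : ModuleCat.{u} R) (i : ℕ) :
    Abelian.Ext.{u} A Y i →ₗ[R] Abelian.Ext.{u} D Y (i + 1) :=
  Abelian.Ext.bilinearCompOfLinear R D A Y 1 i (i + 1) (add_comm 1 i) h.shortExact.extClass

lemma connecting_surjective (h : IsShortExact f g) {i : ℕ}
    (hB : Subsingleton (Abelian.Ext.{u} B Y (i + 1))) :
    Function.Surjective (h.connecting Y i) := fun δ =>
  Abelian.Ext.contravariant_sequence_exact₃ h.shortExact Y δ (hB.elim _ 0)
    (add_comm 1 i)

lemma connecting_injective (h : IsShortExact f g) {i : ℕ}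
    (hB : Subsingleton (Abelian.Ext.{u} B Y i)) :
    Function.Injective (h.connecting Y i) := by
  refine (injective_iff_map_eq_zero _).2 fun α hα => ?_
  obtain ⟨β, rfl⟩ :=
    Abelian.Ext.contravariant_sequence_exact₁ h.shortExact Y α (add_comm 1 i) hα
  rw [Subsingleton.elim β 0, Abelian.Ext.comp_zero]

lemma nonempty_ext_equiv_ext_succ (h : IsShortExact f g) {i : ℕ}
    (hB : Subsingleton (Abelian.Ext.{u} B Y i))
    (hB' : Subsingleton (Abelian.Ext.{u} B Y (i + 1))) :
    Nonempty (Abelian.Ext.{u} A Y i ≃ₗ[R] Abelian.Ext.{u} D Y (i + 1)) :=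
  ⟨LinearEquiv.ofBijective _ ⟨h.connecting_injective hB, h.connecting_surjective hB'⟩⟩

/-- The connecting map `Hom(A, Y) → Ext^1(D, Y)` of `0 → A → B → D → 0`. -/
def homConnecting (h : IsShortExact f g) (Y : ModuleCat.{u} R) :
    (A →ₗ[R] Y) →ₗ[R] Abelian.Ext.{u} D Y 1 :=
  h.connecting Y 0 ∘ₗ
    (ModuleCat.homLinearEquiv.symm ≪≫ₗ Abelian.Ext.linearEquiv₀.symm).toLinearMap

lemma homConnecting_surjective (h : IsShortExact f g)
    (hB : Subsingleton (Abelian.Ext.{u} B Y 1)) : Function.Surjective (h.homConnecting Y) :=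
  (h.connecting_surjective hB).comp (LinearEquiv.surjective _)

lemma exact_homConnecting (h : IsShortExact f g) (Y : ModuleCat.{u} R) :
    Function.Exact (LinearMap.lcomp R Y f) (h.homConnecting Y) := by
  refine fun x => ⟨fun hx => ?_, ?_⟩
  · obtain ⟨β, hβ⟩ := Abelian.Ext.contravariant_sequence_exact₁ h.shortExact Y
      (Abelian.Ext.mk₀ (ModuleCat.ofHom x)) (add_comm 1 0) hx
    obtain ⟨y, rfl⟩ := Abelian.Ext.homEquiv₀.symm.surjective β
    refine ⟨y.hom, ModuleCat.homEquiv.symm.injective (Abelian.Ext.homEquiv₀.symm.injective ?_)⟩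
    exact (Abelian.Ext.mk₀_comp_mk₀ _ _).symm.trans hβ
  · rintro ⟨y, rfl⟩
    refine (congrArg (h.shortExact.extClass.comp · (add_comm 1 0))
      (Abelian.Ext.mk₀_comp_mk₀ (ModuleCat.ofHom f) (ModuleCat.ofHom y)).symm).trans ?_
    exact h.shortExact.extClass_comp_assoc _

lemma exists_extension (h : IsShortExact f g) (hD : Subsingleton (Abelian.Ext.{u} D Y 1))
    (x : A →ₗ[R] Y) : ∃ y : B →ₗ[R] Y, y ∘ₗ f = x :=
  (h.exact_homConnecting Y x).1 (hD.elim _ _)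

lemma subsingleton_ext_one (h : IsShortExact f g) (hB : Subsingleton (Abelian.Ext.{u} B Y 1))
    (hx : ∀ x : A →ₗ[R] Y, ∃ y : B →ₗ[R] Y, y ∘ₗ f = x) :
    Subsingleton (Abelian.Ext.{u} D Y 1) := by
  refine subsingleton_of_forall_eq 0 fun δ => ?_
  obtain ⟨x, rfl⟩ := h.homConnecting_surjective hB δ
  exact (h.exact_homConnecting Y x).2 (hx x)

lemma nonempty_ext_one_equiv (h : IsShortExact f g)
    (hB : Subsingleton (Abelian.Ext.{u} B Y 1)) :
    Nonempty (((A →ₗ[R] Y) ⧸ LinearMap.range (LinearMap.lcomp R Y f)) ≃ₗ[R]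
      Abelian.Ext.{u} D Y 1) :=
  ⟨(Submodule.quotEquivOfEq _ _ (h.exact_homConnecting Y).linearMap_ker_eq.symm).trans
    ((h.homConnecting Y).quotKerEquivOfSurjective (h.homConnecting_surjective hB))⟩

lemma dual (h : IsShortExact f g) (hD : Subsingleton (Abelian.Ext.{u} D Y 1)) :
    IsShortExact (A := ModuleCat.of R (D →ₗ[R] Y)) (B := ModuleCat.of R (B →ₗ[R] Y))
      (D := ModuleCat.of R (A →ₗ[R] Y)) (LinearMap.lcomp R Y g) (LinearMap.lcomp R Y f) where
  injective := LinearMap.lcomp_injective_of_surjective g h.surjective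
  exact := LinearMap.exact_lcomp_of_exact_of_surjective Y h.exact h.surjective
  surjective := h.exists_extension hD

end Contravariant

end IsShortExact

end ShortExact

section Grade

lemma natCast_le_sInf_image_natCast_iff {s : Set ℕ} {m : ℕ} :
    (m : ℕ∞) ≤ sInf ((fun i : ℕ => (i : ℕ∞)) '' s) ↔ ∀ i ∈ s, m ≤ i := by
  simp only [le_sInf_iff, Set.forall_mem_image, Nat.cast_le]

lemma mem_of_sInf_image_natCast_eq {s : Set ℕ} {n : ℕ}
    (h : sInf ((fun i : ℕ => (i : ℕ∞)) '' s) = n) : n ∈ s := by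
  have hs : ((fun i : ℕ => (i : ℕ∞)) '' s).Nonempty := by
    by_contra hs
    rw [Set.not_nonempty_iff_eq_empty.1 hs, sInf_empty] at h
    exact ENat.top_ne_natCast n h
  obtain ⟨m, hm, hmn⟩ := csInf_mem hs
  rwa [← Nat.cast_injective (hmn.trans h)]

variable {R} {A B D X Y : ModuleCat.{u} R}

/-- The grade of `Y` with respect to `X`: the least `i` with `Ext^i(X, Y) ≠ 0`, or `⊤` if there
is none. Over a local ring, taking for `X` the residue field gives the depth of `Y`. -/
def extGrade (X Y : ModuleCat.{u} R) : ℕ∞ :=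
  sInf ((fun i : ℕ => (i : ℕ∞)) '' {i | ¬ Subsingleton (Abelian.Ext.{u} X Y i)})

lemma rdepth_eq_extGrade [IsLocalRing R] (M : ModuleCat.{u} R) :
    rdepth R M = extGrade (ModuleCat.of R (IsLocalRing.ResidueField R)) M := by
  simp only [rdepth, extGrade, subsingleton_extM_iff]

lemma natCast_le_extGrade_iff {m : ℕ} :
    (m : ℕ∞) ≤ extGrade X Y ↔ ∀ i < m, Subsingleton (Abelian.Ext.{u} X Y i) := by
  simp only [extGrade, natCast_le_sInf_image_natCast_iff, Set.mem_ofPred_eq]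
  exact forall_congr' fun i => by rw [← not_lt, not_imp_not]

lemma not_subsingleton_of_extGrade_eq {m : ℕ} (h : extGrade X Y = m) :
    ¬ Subsingleton (Abelian.Ext.{u} X Y m) :=
  mem_of_sInf_image_natCast_eq h

lemma extGrade_congr_right (e : A ≃ₗ[R] B) : extGrade X A = extGrade X B := by
  simp only [extGrade, subsingleton_ext_congr_right e]

namespace IsShortExact

variable {f : A →ₗ[R] B} {g : B →ₗ[R] D}

lemma min_extGrade_le_middle (h : IsShortExact f g) (X : ModuleCat.{u} R) :
    min (extGrade X A) (extGrade X D) ≤ extGrade X B := by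
  refine ENat.forall_natCast_le_iff_le.1 fun m hm => ?_
  rw [le_min_iff] at hm
  simp only [natCast_le_extGrade_iff] at hm ⊢
  exact fun i hi => h.subsingleton_ext_to_middle (hm.1 i hi) (hm.2 i hi)

lemma min_extGrade_le_left (h : IsShortExact f g) (X : ModuleCat.{u} R) :
    min (extGrade X B) (extGrade X D + 1) ≤ extGrade X A := by
  refine ENat.forall_natCast_le_iff_le.1 fun m hm => ?_
  obtain ⟨hB, hD⟩ := le_min_iff.1 hm
  cases m with
  | zero => exact zero_le
  | succ m =>
    rw [Nat.cast_add_one, ENat.add_le_add_iff_right ENat.one_ne_top] at hD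
    rw [natCast_le_extGrade_iff] at hB hD ⊢
    exact fun i hi => h.subsingleton_ext_to_left (hB i hi) fun j hj => hD j (by omega)

lemma min_extGrade_le_right (h : IsShortExact f g) (X : ModuleCat.{u} R) :
    min (extGrade X B + 1) (extGrade X A) ≤ extGrade X D + 1 := by
  refine ENat.forall_natCast_le_iff_le.1 fun m hm => ?_
  obtain ⟨hB, hA⟩ := le_min_iff.1 hm
  cases m with
  | zero => exact zero_le
  | succ m =>
    rw [Nat.cast_add_one, ENat.add_le_add_iff_right ENat.one_ne_top] at hB ⊢
    rw [natCast_le_extGrade_iff] at hA hB ⊢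
    exact fun i hi => h.subsingleton_ext_to_right (hB i hi) (hA (i + 1) (by omega))

lemma extGrade_left_eq_of_left (h : IsShortExact f g)
    (hlt : extGrade X A + 1 ≤ extGrade X B) : extGrade X A = extGrade X D + 1 := by
  have h₁ := h.min_extGrade_le_left X
  have h₂ := h.min_extGrade_le_right X
  rw [min_le_iff] at h₁ h₂
  generalize extGrade X A = a at *
  generalize extGrade X B = b at *
  generalize extGrade X D = d at *
  rcases h₁ with h₁ | h₁ <;> rcases h₂ with h₂ | h₂ <;> enat_to_nat <;> omega

lemma extGrade_left_eq_of_right (h : IsShortExact f g)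
    (hlt : extGrade X D + 1 ≤ extGrade X B) : extGrade X A = extGrade X D + 1 := by
  have h₁ := h.min_extGrade_le_left X
  have h₂ := h.min_extGrade_le_right X
  rw [min_le_iff] at h₁ h₂
  generalize extGrade X A = a at *
  generalize extGrade X B = b at *
  generalize extGrade X D = d at *
  rcases h₁ with h₁ | h₁ <;> rcases h₂ with h₂ | h₂ <;> enat_to_nat <;> omega

lemma extGrade_middle_eq (h : IsShortExact f g)
    (hlt : extGrade X A + 1 ≤ extGrade X D) : extGrade X B = extGrade X A := by
  have h₁ := h.min_extGrade_le_left X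
  have h₂ := h.min_extGrade_le_middle X
  rw [min_le_iff] at h₁ h₂
  generalize extGrade X A = a at *
  generalize extGrade X B = b at *
  generalize extGrade X D = d at *
  rcases h₁ with h₁ | h₁ <;> rcases h₂ with h₂ | h₂ <;> enat_to_nat <;> omega

end IsShortExact

end Grade

section EvaluationMap

variable {R} {A B D C P X Y Z : ModuleCat.{u} R}

/-- `Y` is acyclic for `Hom(-, C)`: all the higher Ext modules `Ext^i(Y, C)` vanish. -/
def IsExtAcyclic (C Y : ModuleCat.{u} R) : Prop :=
  ∀ i : ℕ, 0 < i → Subsingleton (Abelian.Ext.{u} Y C i)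

lemma isExtAcyclic_of_projective (C P : ModuleCat.{u} R) [Module.Projective R P] :
    IsExtAcyclic C P := by
  have : Projective P := (IsProjective.iff_projective P).1 inferInstance
  rintro (_ | i) hi
  · exact absurd hi (lt_irrefl 0)
  · exact Abelian.Ext.subsingleton_of_projective P C i

lemma IsShortExact.isExtAcyclic_left {f : A →ₗ[R] B} {g : B →ₗ[R] D} (h : IsShortExact f g)
    (hB : IsExtAcyclic C B) (hD : IsExtAcyclic C D) : IsExtAcyclic C A := fun i hi =>
  h.subsingleton_ext_from_left (hB i hi) (hD (i + 1) i.succ_pos)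

lemma exists_isShortExact_of_finite [IsNoetherianRing R] (Y : ModuleCat.{u} R)
    [Module.Finite R Y] :
    ∃ (K P : ModuleCat.{u} R) (f : K →ₗ[R] P) (g : P →ₗ[R] Y), IsShortExact f g ∧
      Module.Finite R K ∧ Module.Finite R P ∧ Module.Free R P := by
  obtain ⟨n, g, hg⟩ := Module.Finite.exists_fin' R Y
  exact ⟨_, ModuleCat.of R (Fin n → R), _, g, isShortExact_subtype_ker hg,
    inferInstanceAs (Module.Finite R (LinearMap.ker g)),
    inferInstanceAs (Module.Finite R (Fin n → R)), inferInstanceAs (Module.Free R (Fin n → R))⟩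

/-- The `C`-dual `Hom(Y, C)`. -/
abbrev dualModule (C Y : ModuleCat.{u} R) : ModuleCat.{u} R :=
  ModuleCat.of R (Y →ₗ[R] C)

/-- The `C`-dual of a linear map. -/
abbrev dualMap (C : ModuleCat.{u} R) (φ : Z →ₗ[R] Y) : dualModule C Y →ₗ[R] dualModule C Z :=
  LinearMap.lcomp R C φ

/-- The natural map `Ext^i(X, Hom(Y, C)) → Hom(Y, Ext^i(X, C))` induced by evaluation at the
elements of `Y`. -/
def extEval (X C Y : ModuleCat.{u} R) (i : ℕ) :
    Abelian.Ext.{u} X (dualModule C Y) i →ₗ[R] Y →ₗ[R] Abelian.Ext.{u} X C i :=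
  (extPostcomp X (dualModule C Y) C i ∘ₗ bidualityMap R C Y).flip

lemma extEval_apply {i : ℕ} (β : Abelian.Ext.{u} X (dualModule C Y) i) (y : Y) :
    extEval X C Y i β y = extPostcomp X (dualModule C Y) C i (bidualityMap R C Y y) β :=
  rfl

lemma extEval_dualMap {i : ℕ} (φ : Z →ₗ[R] Y) (β : Abelian.Ext.{u} X (dualModule C Y) i) :
    extEval X C Z i (extPostcomp X _ _ i (dualMap C φ) β) = extEval X C Y i β ∘ₗ φ := by
  ext z
  rw [extEval_apply, ← extPostcomp_comp]
  rfl

lemma extEval_bijective_of_free [Module.Free R P] [Module.Finite R P] (i : ℕ) :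
    Function.Bijective (extEval X C P i) := by
  classical
  let b := Module.Free.chooseBasis R P
  let ins (j : Module.Free.ChooseBasisIndex R P) : C →ₗ[R] dualModule C P :=
    LinearMap.smulRightₗ (b.coord j)
  have id_eq_sum : (LinearMap.id : dualModule C P →ₗ[R] dualModule C P) =
      ∑ j, ins j ∘ₗ bidualityMap R C P (b j) := by
    refine LinearMap.ext fun h => b.ext fun k => ?_
    simp [ins, bidualityMap, Finsupp.single_apply]
  refine ⟨(injective_iff_map_eq_zero _).2 fun β hβ => ?_, fun h => ?_⟩
  · rw [← extPostcomp_id β, id_eq_sum, map_sum, LinearMap.sum_apply]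
    refine Finset.sum_eq_zero fun j _ => ?_
    rw [extPostcomp_comp, ← extEval_apply, hβ, LinearMap.zero_apply, map_zero]
  · have extEval_ins (j k) : extEval X C P i (extPostcomp X _ _ i (ins j) (h (b j))) (b k) =
        b.coord j (b k) • h (b j) := by
      have : bidualityMap R C P (b k) ∘ₗ ins j = b.coord j (b k) • LinearMap.id := rfl
      rw [extEval_apply, ← extPostcomp_comp, this, map_smul, LinearMap.smul_apply, extPostcomp_id]
    refine ⟨∑ j, extPostcomp X _ _ i (ins j) (h (b j)), b.ext fun k => ?_⟩
    simp [extEval_ins, Finsupp.single_apply]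

section Noetherian

variable [IsNoetherianRing R]

lemma extGrade_le_extGrade_dualModule [Module.Finite R Y] (hY : IsExtAcyclic C Y) :
    extGrade X C ≤ extGrade X (dualModule C Y) := by
  refine ENat.forall_natCast_le_iff_le.1 fun m hm => ?_
  rw [natCast_le_extGrade_iff] at hm ⊢
  intro i
  induction i using Nat.strong_induction_on generalizing Y with
  | _ i ih =>
    intro hi
    obtain ⟨K, P, f, g, h, _, _, _⟩ := exists_isShortExact_of_finite Y
    have hK := h.isExtAcyclic_left (isExtAcyclic_of_projective C P) hY
    have := hm i hi
    exact (h.dual (hY 1 one_pos)).subsingleton_ext_to_left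
      (extEval_bijective_of_free i).injective.subsingleton
      fun j hj => ih j hj hK (hj.trans hi)

lemma extEval_injective [Module.Finite R Y] (hY : IsExtAcyclic C Y) {t : ℕ}
    (ht : t ≤ extGrade X C) : Function.Injective (extEval X C Y t) := by
  obtain ⟨K, P, f, g, h, _, _, _⟩ := exists_isShortExact_of_finite Y
  have hK := h.isExtAcyclic_left (isExtAcyclic_of_projective C P) hY
  have dualMap_injective := (h.dual (hY 1 one_pos)).extPostcomp_injective
    (natCast_le_extGrade_iff.1 (ht.trans (extGrade_le_extGrade_dualModule hK)))
  refine (injective_iff_map_eq_zero _).2 fun β hβ => dualMap_injective ?_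
  apply (extEval_bijective_of_free t).injective
  rw [extEval_dualMap, hβ, map_zero, map_zero, LinearMap.zero_comp]

lemma extEval_surjective [Module.Finite R Y] (hY : IsExtAcyclic C Y) {t : ℕ}
    (ht : t ≤ extGrade X C) : Function.Surjective (extEval X C Y t) := by
  intro l
  obtain ⟨K, P, f, g, h, _, _, _⟩ := exists_isShortExact_of_finite Y
  have hK := h.isExtAcyclic_left (isExtAcyclic_of_projective C P) hY
  obtain ⟨γ, hγ⟩ := (extEval_bijective_of_free t).surjective (l ∘ₗ g)
  have dualMap_γ : extPostcomp X _ _ t (dualMap C f) γ = 0 := by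
    apply extEval_injective hK ht
    rw [extEval_dualMap, hγ, LinearMap.comp_assoc, h.exact.linearMap_comp_eq_zero,
      LinearMap.comp_zero, map_zero]
  obtain ⟨β, rfl⟩ := (h.dual (hY 1 one_pos)).exists_extPostcomp_eq dualMap_γ
  refine ⟨β, (LinearMap.cancel_right h.surjective).1 ?_⟩
  rw [← extEval_dualMap, hγ]

end Noetherian

end EvaluationMap

section Local

variable {R} [IsLocalRing R] {C Y Z : ModuleCat.{u} R}

lemma exists_linearMap_ne_zero_of_ne_top {M E : Type*} [AddCommGroup M] [Module R M]
    [Module.Finite R M] [AddCommGroup E] [Module R E] {N : Submodule R M} (hN : N ≠ ⊤) {e : E}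
    (he : e ≠ 0) (hm : ∀ r ∈ IsLocalRing.maximalIdeal R, r • e = 0) :
    ∃ l : M →ₗ[R] E, l ≠ 0 ∧ N ≤ LinearMap.ker l := by
  obtain ⟨N', hN', hle⟩ := (eq_top_or_exists_le_coatom N).resolve_left hN
  have : IsSimpleModule R (M ⧸ N') := isSimpleModule_iff_isCoatom.2 hN'
  obtain ⟨m, hmax, ⟨q⟩⟩ := isSimpleModule_iff_quot_maximal.1 this
  obtain rfl := IsLocalRing.eq_maximalIdeal hmax
  let s := Submodule.liftQ (IsLocalRing.maximalIdeal R) (LinearMap.toSpanSingleton R E e) hm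
  refine ⟨s ∘ₗ q.toLinearMap ∘ₗ N'.mkQ, fun h0 => he ?_, fun z hz => ?_⟩
  · obtain ⟨y, hy⟩ := (q.surjective.comp N'.mkQ_surjective) (Submodule.Quotient.mk 1)
    calc e = s (q (N'.mkQ y)) := by rw [show q (N'.mkQ y) = _ from hy]; exact (one_smul R e).symm
      _ = 0 := LinearMap.congr_fun h0 y
  · have : N'.mkQ z = 0 := (Submodule.Quotient.mk_eq_zero N').2 (hle hz)
    simp [this]

lemma smul_ext_residueField_eq_zero {i : ℕ}
    (α : Abelian.Ext.{u} (ModuleCat.of R (IsLocalRing.ResidueField R)) Y i) {r : R}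
    (hr : r ∈ IsLocalRing.maximalIdeal R) : r • α = 0 := by
  have smul_id_eq_zero : r • 𝟙 (ModuleCat.of R (IsLocalRing.ResidueField R)) = 0 := by
    ext z
    exact Module.mem_annihilator.1 ((Ideal.annihilator_quotient (I :=
      IsLocalRing.maximalIdeal R)).ge hr) z
  rw [← Abelian.Ext.mk₀_id_comp α, ← Abelian.Ext.smul_comp, ← Abelian.Ext.mk₀_smul,
    smul_id_eq_zero, Abelian.Ext.mk₀_zero, Abelian.Ext.zero_comp]

variable [IsNoetherianRing R]

lemma exists_ext_dualModule_ne_zero [Module.Finite R Y] [Module.Finite R Z]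
    (hY : IsExtAcyclic C Y) (hZ : IsExtAcyclic C Z) {φ : Z →ₗ[R] Y}
    (hφ : ¬ Function.Surjective φ) {t : ℕ} (ht : rdepth R C = t) :
    ∃ β : Abelian.Ext.{u} (ModuleCat.of R (IsLocalRing.ResidueField R)) (dualModule C Y) t,
      β ≠ 0 ∧ extPostcomp _ _ _ t (dualMap C φ) β = 0 := by
  rw [rdepth_eq_extGrade] at ht
  have := not_subsingleton_iff_nontrivial.1 (not_subsingleton_of_extGrade_eq ht)
  obtain ⟨e, he⟩ := exists_ne
    (0 : Abelian.Ext.{u} (ModuleCat.of R (IsLocalRing.ResidueField R)) C t)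
  obtain ⟨l, hl, hφl⟩ := exists_linearMap_ne_zero_of_ne_top
    (mt LinearMap.range_eq_top.1 hφ) he fun r hr => smul_ext_residueField_eq_zero e hr
  obtain ⟨β, rfl⟩ := extEval_surjective hY ht.ge l
  refine ⟨β, ne_of_apply_ne _ (hl.trans_eq (map_zero _).symm), extEval_injective hZ ht.ge ?_⟩
  rw [extEval_dualMap, map_zero]
  exact LinearMap.range_le_ker_iff.1 hφl

lemma rdepth_dualModule [Module.Finite R Y] [Nontrivial Y] (hY : IsExtAcyclic C Y) :
    rdepth R (dualModule C Y) = rdepth R C := by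
  refine le_antisymm (ENat.forall_natCast_le_iff_le.1 fun m hm => ?_) ?_
  · by_contra! hlt
    obtain ⟨t, ht⟩ := ENat.ne_top_iff_exists.1 hlt.ne_top
    obtain ⟨y, hy⟩ := exists_ne (0 : Y)
    have zero_not_surjective : ¬ Function.Surjective (0 : Y →ₗ[R] Y) := fun h =>
      let ⟨_, hz⟩ := h y
      hy hz.symm
    obtain ⟨β, hβ, -⟩ := exists_ext_dualModule_ne_zero hY hY zero_not_surjective ht.symm
    rw [rdepth_eq_extGrade, natCast_le_extGrade_iff] at hm
    have := hm t (by rw [← ht] at hlt; exact_mod_cast hlt)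
    exact hβ (Subsingleton.elim β 0)
  · simpa only [rdepth_eq_extGrade] using extGrade_le_extGrade_dualModule hY

end Local

section GCDimension

variable {R} {A B C D K M X : ModuleCat.{u} R}

namespace IsTotallyCReflexive

lemma isExtAcyclic (h : IsTotallyCReflexive R C X) : IsExtAcyclic C X := fun i hi =>
  (subsingleton_extM_iff X C i).1 (h.2.2.1 i hi)

lemma isExtAcyclic_dualModule (h : IsTotallyCReflexive R C X) :
    IsExtAcyclic C (dualModule C X) := fun i hi =>
  (subsingleton_extM_iff _ C i).1 (h.2.2.2 i hi)

/-- The isomorphism of a totally `C`-reflexive module with its bidual. -/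
def bidualEquiv (h : IsTotallyCReflexive R C X) : X ≃ₗ[R] dualModule C (dualModule C X) :=
  LinearEquiv.ofBijective (bidualityMap R C X) h.2.1

lemma comp_bidualEquiv_symm (hA : IsTotallyCReflexive R C A) (hB : IsTotallyCReflexive R C B)
    (f : A →ₗ[R] B) : f ∘ₗ hA.bidualEquiv.symm.toLinearMap =
      hB.bidualEquiv.symm.toLinearMap ∘ₗ dualMap C (dualMap C f) := by
  refine LinearMap.ext fun x => hB.bidualEquiv.injective ?_
  obtain ⟨a, rfl⟩ := hA.bidualEquiv.surjective x
  simp only [LinearMap.comp_apply, LinearEquiv.coe_coe, LinearEquiv.symm_apply_apply,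
    LinearEquiv.apply_symm_apply]
  rfl

lemma dual [IsNoetherianRing R] [Module.Finite R C] (h : IsTotallyCReflexive R C X) :
    IsTotallyCReflexive R C (dualModule C X) := by
  have := h.1
  refine ⟨inferInstanceAs (Module.Finite R (X →ₗ[R] C)), ?_, h.2.2.2, fun i hi => ?_⟩
  · have dualMap_bijective : Function.Bijective
        (dualMap (Y := dualModule C (dualModule C X)) C (bidualityMap R C X)) :=
      (h.bidualEquiv.symm.congrLeft C R).bijective
    exact (dualMap_bijective.of_comp_iff' (bidualityMap R C (dualModule C X))).1
      Function.bijective_id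
  · rw [subsingleton_extM_iff, ← subsingleton_ext_congr_left h.bidualEquiv]
    exact h.isExtAcyclic i hi

end IsTotallyCReflexive

lemma gcdimLE_succ_iff {n : ℕ} :
    gcdimLE R C (n + 1) M ↔ ∃ (X K : ModuleCat.{u} R) (f : K →ₗ[R] X) (g : X →ₗ[R] M),
      IsShortExact f g ∧ IsTotallyCReflexive R C X ∧ gcdimLE R C n K := by
  refine exists₄_congr fun X K f g => ⟨fun ⟨hf, hg, hfg, hX, hK⟩ => ?_, fun ⟨h, hX, hK⟩ => ?_⟩
  · exact ⟨⟨hf, LinearMap.exact_iff.2 hfg, hg⟩, hX, hK⟩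
  · exact ⟨h.injective, h.surjective, h.exact.linearMap_ker_eq, hX, hK⟩

namespace gcdimLE

lemma finite {n : ℕ} (h : gcdimLE R C n M) : Module.Finite R M := by
  cases n with
  | zero => exact h.1
  | succ n =>
    obtain ⟨X, K, f, g, hs, hX, -⟩ := gcdimLE_succ_iff.1 h
    have := hX.1
    exact Module.Finite.of_surjective g hs.surjective

lemma subsingleton_ext {n : ℕ} (h : gcdimLE R C n M) {i : ℕ} (hi : n < i) :
    Subsingleton (Abelian.Ext.{u} M C i) := by
  induction n generalizing M i with
  | zero => exact IsTotallyCReflexive.isExtAcyclic h i hi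
  | succ n ih =>
    obtain ⟨X, K, f, g, hs, hX, hK⟩ := gcdimLE_succ_iff.1 h
    obtain ⟨i, rfl⟩ := Nat.exists_eq_succ_of_ne_zero (Nat.ne_zero_of_lt hi)
    exact hs.subsingleton_ext_from_right (ih hK (Nat.succ_lt_succ_iff.1 hi))
      (hX.isExtAcyclic _ i.succ_pos)

end gcdimLE

lemma IsShortExact.isTotallyCReflexive_right {f : A →ₗ[R] B} {g : B →ₗ[R] D}
    (h : IsShortExact f g) (hA : IsTotallyCReflexive R C A) (hB : IsTotallyCReflexive R C B)
    (hD : Subsingleton (Abelian.Ext.{u} D C 1)) : IsTotallyCReflexive R C D := by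
  have isExtAcyclic_D : IsExtAcyclic C D := by
    rintro (_ | _ | i) hi
    · exact absurd hi (lt_irrefl 0)
    · exact hD
    · exact h.subsingleton_ext_from_right (hA.isExtAcyclic _ i.succ_pos)
        (hB.isExtAcyclic _ (by omega))
  have := hB.1
  have hdual := h.dual hD
  have hbidual := hdual.dual (hA.isExtAcyclic_dualModule 1 one_pos)
  refine ⟨Module.Finite.of_surjective g h.surjective, ?_, fun i hi => ?_, fun i hi => ?_⟩
  · exact LinearMap.bijective_of_surjective_of_bijective_of_right_exact f g _ _
      (bidualityMap R C A) (bidualityMap R C B) (bidualityMap R C D) rfl rfl h.exact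
      hbidual.exact hA.2.1.surjective hB.2.1 h.surjective hbidual.surjective
  · exact (subsingleton_extM_iff _ _ i).2 (isExtAcyclic_D i hi)
  · exact (subsingleton_extM_iff _ _ i).2
      (hdual.isExtAcyclic_left hB.isExtAcyclic_dualModule hA.isExtAcyclic_dualModule i hi)

lemma gcdimLE.of_succ {n : ℕ} (h : gcdimLE R C (n + 1) M)
    (hM : Subsingleton (Abelian.Ext.{u} M C (n + 1))) : gcdimLE R C n M := by
  induction n generalizing M with
  | zero =>
    obtain ⟨X, K, f, g, hs, hX, hK⟩ := gcdimLE_succ_iff.1 h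
    exact hs.isTotallyCReflexive_right hK hX hM
  | succ n ih =>
    obtain ⟨X, K, f, g, hs, hX, hK⟩ := gcdimLE_succ_iff.1 h
    exact gcdimLE_succ_iff.2 ⟨X, K, f, g, hs, hX,
      ih hK (hs.subsingleton_ext_from_left (hX.isExtAcyclic _ n.succ_pos) hM)⟩

lemma gcdimLE_of_gcdim_eq {n : ℕ} (h : gcdim R C M = n) : gcdimLE R C n M :=
  mem_of_sInf_image_natCast_eq h

lemma gcdimLE.exists_not_subsingleton_ext [Nontrivial M] {n : ℕ} (h : gcdimLE R C n M) :
    ∃ b, gcdimLE R C b M ∧ ¬ Subsingleton (Abelian.Ext.{u} M C b) := by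
  induction n with
  | zero =>
    refine ⟨0, h, fun hM => not_subsingleton M ?_⟩
    have : Subsingleton (M →ₗ[R] C) :=
      (Abelian.Ext.homEquiv₀.trans ModuleCat.homEquiv).symm.subsingleton
    exact (IsTotallyCReflexive.bidualEquiv h).toEquiv.subsingleton
  | succ n ih =>
    by_cases hM : Subsingleton (Abelian.Ext.{u} M C (n + 1))
    · exact ih (h.of_succ hM)
    · exact ⟨n + 1, h, hM⟩

end GCDimension

section AuslanderBridger

variable {R} [IsLocalRing R] {C M X : ModuleCat.{u} R}

lemma rdepth_congr {A B : ModuleCat.{u} R} (e : A ≃ₗ[R] B) : rdepth R A = rdepth R B := by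
  simp only [rdepth_eq_extGrade, extGrade_congr_right e]

variable [IsNoetherianRing R] [Module.Finite R C]

namespace IsTotallyCReflexive

lemma rdepth_le (h : IsTotallyCReflexive R C X) : rdepth R C ≤ rdepth R X := by
  have := h.dual.1
  rw [rdepth_congr h.bidualEquiv, rdepth_eq_extGrade, rdepth_eq_extGrade]
  exact extGrade_le_extGrade_dualModule h.isExtAcyclic_dualModule

lemma rdepth_eq [Nontrivial X] (h : IsTotallyCReflexive R C X) : rdepth R X = rdepth R C := by
  have := h.dual.1
  have : Nontrivial (dualModule C X) := not_subsingleton_iff_nontrivial.1 fun _ =>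
    not_subsingleton X h.bidualEquiv.toEquiv.subsingleton
  rw [rdepth_congr h.bidualEquiv, rdepth_dualModule h.isExtAcyclic_dualModule]

end IsTotallyCReflexive

lemma IsShortExact.rdepth_right_add_one {A B D : ModuleCat.{u} R} {f : A →ₗ[R] B}
    {g : B →ₗ[R] D} (h : IsShortExact f g) (hA : IsTotallyCReflexive R C A)
    (hB : IsTotallyCReflexive R C B) (hD : ¬ Subsingleton (Abelian.Ext.{u} D C 1)) :
    rdepth R D + 1 = rdepth R C := by
  refine le_antisymm ?_ ?_
  · by_contra! hlt
    obtain ⟨t, ht⟩ := ENat.ne_top_iff_exists.1 hlt.ne_top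
    have := hA.dual.1
    have := hB.dual.1
    have dualMap_not_surjective : ¬ Function.Surjective (dualMap C f) := fun hf =>
      hD (h.subsingleton_ext_one (hB.isExtAcyclic 1 one_pos) hf)
    obtain ⟨β, hβ, hfβ⟩ := exists_ext_dualModule_ne_zero hA.isExtAcyclic_dualModule
      hB.isExtAcyclic_dualModule dualMap_not_surjective ht.symm
    have f_injective := h.extPostcomp_injective
      (natCast_le_extGrade_iff.1 ((Order.le_of_lt_add_one (ht.trans_lt hlt)).trans_eq
        (rdepth_eq_extGrade D)))
    have symm_β : extPostcomp _ _ A t hA.bidualEquiv.symm.toLinearMap β = 0 := by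
      apply f_injective
      rw [← extPostcomp_comp, hA.comp_bidualEquiv_symm hB, extPostcomp_comp, hfβ, map_zero,
        map_zero]
    apply hβ
    rw [← extPostcomp_id β, ← hA.bidualEquiv.comp_symm, extPostcomp_comp, symm_β, map_zero]
  · have hle := h.min_extGrade_le_right (ModuleCat.of R (IsLocalRing.ResidueField R))
    simp only [← rdepth_eq_extGrade] at hle
    exact (le_min (hB.rdepth_le.trans le_self_add) hA.rdepth_le).trans hle

/-- The Auslander–Bridger formula. -/
lemma gcdimLE.rdepth_add {n : ℕ} (h : gcdimLE R C n M)
    (hM : ¬ Subsingleton (Abelian.Ext.{u} M C n)) : rdepth R M + n = rdepth R C := by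
  induction n generalizing M with
  | zero =>
    have : Nontrivial M := not_subsingleton_iff_nontrivial.1 fun _ =>
      hM (Abelian.Ext.homEquiv₀.trans ModuleCat.homEquiv).subsingleton
    rw [Nat.cast_zero, add_zero, IsTotallyCReflexive.rdepth_eq h]
  | succ n ih =>
    obtain ⟨X, K, f, g, hs, hX, hK⟩ := gcdimLE_succ_iff.1 h
    obtain _ | m := n
    · simpa using hs.rdepth_right_add_one hK hX hM
    · have hKn := ih hK fun hK' => hM
        (hs.subsingleton_ext_from_right hK' (hX.isExtAcyclic _ (by omega)))
      have rdepth_K : rdepth R K = rdepth R M + 1 := by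
        have rdepth_K_lt : rdepth R K + 1 ≤ rdepth R X :=
          le_trans (by gcongr; simp) (hKn.trans_le hX.rdepth_le)
        simp only [rdepth_eq_extGrade] at rdepth_K_lt ⊢
        exact hs.extGrade_left_eq_of_left rdepth_K_lt
      rw [← hKn, rdepth_K]
      push_cast
      ring

end AuslanderBridger

section DualCokernel

variable {R} {A B C D K L M U X X₁ X₂ : ModuleCat.{u} R}

lemma IsShortExact.finite_left [IsNoetherianRing R] [Module.Finite R B] {f : A →ₗ[R] B}
    {g : B →ₗ[R] D} (h : IsShortExact f g) : Module.Finite R A :=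
  Module.Finite.of_injective f h.injective

lemma isShortExact_mkQ_range {f : A →ₗ[R] B} (hf : Function.Injective f) :
    IsShortExact (D := ModuleCat.of R (B ⧸ LinearMap.range f)) f (LinearMap.range f).mkQ where
  injective := hf
  exact := LinearMap.exact_iff.2 (Submodule.ker_mkQ _)
  surjective := Submodule.mkQ_surjective _

lemma exists_isShortExact_mkQ_range {f : A →ₗ[R] B} {g : B →ₗ[R] D} (h : Function.Exact f g) :
    ∃ g' : ModuleCat.of R (B ⧸ LinearMap.range f) →ₗ[R] D,
      g' ∘ₗ (LinearMap.range f).mkQ = g ∧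
      IsShortExact (D := ModuleCat.of R (D ⧸ LinearMap.range g)) g' (LinearMap.range g).mkQ := by
  have hker := h.linearMap_ker_eq
  refine ⟨(LinearMap.range f).liftQ g hker.ge, Submodule.liftQ_mkQ _ _ _, ?_, ?_,
    Submodule.mkQ_surjective _⟩
  · rw [← LinearMap.ker_eq_bot]
    exact Submodule.ker_liftQ_eq_bot _ _ _ hker.le
  · rw [LinearMap.exact_iff, Submodule.ker_mkQ, Submodule.range_liftQ]

lemma IsShortExact.exists_isShortExact_quotient {f : A →ₗ[R] B} {g : B →ₗ[R] D}
    (h : IsShortExact f g) (s : U →ₗ[R] A) :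
    ∃ (f' : ModuleCat.of R (A ⧸ LinearMap.range s) →ₗ[R]
        ModuleCat.of R (B ⧸ LinearMap.range (f ∘ₗ s)))
      (g' : ModuleCat.of R (B ⧸ LinearMap.range (f ∘ₗ s)) →ₗ[R] D), IsShortExact f' g' := by
  have hf : LinearMap.range s = (LinearMap.range (f ∘ₗ s)).comap f := by
    rw [LinearMap.range_comp, Submodule.comap_map_eq_of_injective h.injective]
  have hg : LinearMap.range (f ∘ₗ s) ≤ LinearMap.ker g := by
    rw [h.exact.linearMap_ker_eq]
    exact LinearMap.range_comp_le_range s f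
  refine ⟨Submodule.mapQ _ _ f hf.le, Submodule.liftQ _ g hg, ?_, ?_, ?_⟩
  · rw [← LinearMap.ker_eq_bot, Submodule.ker_mapQ, ← hf, Submodule.mkQ_map_self]
  · rw [LinearMap.exact_iff, Submodule.ker_liftQ, h.exact.linearMap_ker_eq,
      Submodule.range_mapQ]
  · rw [← LinearMap.range_eq_top, Submodule.range_liftQ, LinearMap.range_eq_top]
    exact h.surjective

/-- The cokernel of the `C`-dual of a linear map `d`. When `d` is a projective presentation of `M`
this is the transpose of `M` with respect to `C`, up to `C`-duals of projective summands. -/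
abbrev dualCokernel (C : ModuleCat.{u} R) (d : X₁ →ₗ[R] X) : ModuleCat.{u} R :=
  ModuleCat.of R (dualModule C X₁ ⧸ LinearMap.range (dualMap C d))

variable {f : K →ₗ[R] X} {g : X →ₗ[R] M} {p : L →ₗ[R] X₁} {q : X₁ →ₗ[R] K} {r : X₂ →ₗ[R] L}

lemma IsShortExact.exact_dualMap (hM : IsShortExact f g) (C : ModuleCat.{u} R) :
    Function.Exact (dualMap C g) (dualMap C f) :=
  LinearMap.exact_lcomp_of_exact_of_surjective C hM.exact hM.surjective

lemma dualMap_injective (hr : Function.Surjective r) (C : ModuleCat.{u} R) :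
    Function.Injective (dualMap C r) :=
  LinearMap.lcomp_injective_of_surjective r hr

lemma exact_dualMap_comp (hM : IsShortExact f g) (hK : IsShortExact p q)
    (hr : Function.Surjective r) (hExt : Subsingleton (Abelian.Ext.{u} M C 1)) :
    Function.Exact (dualMap C (f ∘ₗ q)) (dualMap C (p ∘ₗ r)) :=
  ((hM.dual hExt).surjective.comp_exact_iff_exact).2
    ((dualMap_injective hr C).comp_exact_iff_exact.2 (hK.exact_dualMap C))

lemma exists_isShortExact_dualCokernel (hM : IsShortExact f g) (hK : IsShortExact p q)
    (hr : Function.Surjective r) (hExt : Subsingleton (Abelian.Ext.{u} M C 1)) :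
    ∃ θ : dualCokernel C (f ∘ₗ q) →ₗ[R] dualModule C X₂,
      θ ∘ₗ (LinearMap.range (dualMap C (f ∘ₗ q))).mkQ = dualMap C (p ∘ₗ r) ∧
      IsShortExact (D := dualCokernel C (p ∘ₗ r)) θ (LinearMap.range (dualMap C (p ∘ₗ r))).mkQ :=
  exists_isShortExact_mkQ_range (exact_dualMap_comp hM hK hr hExt)

end DualCokernel

section DualityOfExt

variable {R} {C K L M N X X₁ X₂ : ModuleCat.{u} R} {f : K →ₗ[R] X} {g : X →ₗ[R] M}

lemma gcdimLE.of_linearEquiv {n : ℕ} (h : gcdimLE R C (n + 1) M) (e : M ≃ₗ[R] N) :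
    gcdimLE R C (n + 1) N := by
  obtain ⟨X, K, f, g, hs, hX, hK⟩ := gcdimLE_succ_iff.1 h
  exact gcdimLE_succ_iff.2 ⟨X, K, f, e.toLinearMap ∘ₗ g, ⟨hs.injective,
    e.postcomp_exact_iff_exact.2 hs.exact, e.surjective.comp hs.surjective⟩, hX, hK⟩

lemma gcdimLE.dualCokernel [IsNoetherianRing R] [Module.Finite R C] {a : ℕ}
    (ha : gcdimLE R C a (dualModule C M)) (h : IsShortExact f g)
    (hX : IsTotallyCReflexive R C X) (hK : IsTotallyCReflexive R C K) :
    gcdimLE R C (a + 2) (dualCokernel C f) := by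
  obtain ⟨f', -, hs⟩ := exists_isShortExact_mkQ_range (h.exact_dualMap C)
  have hg := isShortExact_mkQ_range (dualMap_injective h.surjective C)
  exact gcdimLE_succ_iff.2 ⟨_, _, _, _, hs, hK.dual,
    gcdimLE_succ_iff.2 ⟨_, _, _, _, hg, hX.dual, ha⟩⟩

lemma gcdimLE.ext [IsNoetherianRing R] [Module.Finite R C] {a m : ℕ}
    (hM : gcdimLE R C (m + 1) M)
    (hExt : ∀ i, 0 < i → i < m + 1 → Subsingleton (Abelian.Ext.{u} M C i))
    (ha : gcdimLE R C a (dualModule C M)) :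
    gcdimLE R C (m + a + 2) (ModuleCat.of R (Abelian.Ext.{u} M C (m + 1))) := by
  induction m generalizing a M with
  | zero =>
    obtain ⟨X, K, f, g, h, hX, hK⟩ := gcdimLE_succ_iff.1 hM
    obtain ⟨e⟩ := h.nonempty_ext_one_equiv (hX.isExtAcyclic 1 one_pos)
    rw [Nat.zero_add]
    exact (ha.dualCokernel h hX hK).of_linearEquiv e
  | succ m ih =>
    obtain ⟨X, K, f, g, h, hX, hK⟩ := gcdimLE_succ_iff.1 hM
    have dual_K : gcdimLE R C (a + 1) (dualModule C K) := gcdimLE_succ_iff.2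
      ⟨_, _, _, _, h.dual (hExt 1 one_pos (by omega)), hX.dual, ha⟩
    have ext_K : ∀ i, 0 < i → i < m + 1 → Subsingleton (Abelian.Ext.{u} K C i) := fun i hi hi' =>
      h.subsingleton_ext_from_left (hX.isExtAcyclic i hi) (hExt (i + 1) i.succ_pos (by omega))
    obtain ⟨e⟩ := h.nonempty_ext_equiv_ext_succ (hX.isExtAcyclic (m + 1) (by omega))
      (hX.isExtAcyclic (m + 2) (by omega))
    rw [Nat.add_right_comm m 1 a]
    exact (ih hK ext_K dual_K).of_linearEquiv e

lemma exists_bidualityMap_eq_comp_mkQ (hX : IsTotallyCReflexive R C X)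
    (hX₁ : IsTotallyCReflexive R C X₁) {d : X₁ →ₗ[R] X} (h : dualCokernel C d →ₗ[R] C) :
    ∃ x, d x = 0 ∧ bidualityMap R C X₁ x = h ∘ₗ (LinearMap.range (dualMap C d)).mkQ := by
  obtain ⟨x, hx⟩ := hX₁.2.1.surjective (h ∘ₗ (LinearMap.range (dualMap C d)).mkQ)
  refine ⟨x, hX.2.1.injective (LinearMap.ext fun φ => ?_), hx⟩
  calc φ (d x) = h (Submodule.Quotient.mk (φ ∘ₗ d)) := LinearMap.congr_fun hx (φ ∘ₗ d)
    _ = h 0 := congrArg h ((Submodule.Quotient.mk_eq_zero _).2 ⟨φ, rfl⟩)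
    _ = bidualityMap R C X 0 φ := by rw [map_zero, map_zero, LinearMap.zero_apply]

lemma subsingleton_hom_dualCokernel (hX : IsTotallyCReflexive R C X)
    (hK : IsTotallyCReflexive R C K) (hf : Function.Injective f) :
    Subsingleton (dualCokernel C f →ₗ[R] C) := by
  refine subsingleton_of_forall_eq 0 fun h => Submodule.linearMap_qext _ ?_
  obtain ⟨x, hfx, hx⟩ := exists_bidualityMap_eq_comp_mkQ hX hK h
  obtain rfl : x = 0 := hf (hfx.trans (map_zero f).symm)
  rw [LinearMap.zero_comp, ← hx, map_zero]

variable {p : L →ₗ[R] X₁} {q : X₁ →ₗ[R] K} {r : X₂ →ₗ[R] L}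

lemma exists_extension_dualCokernel (hX : IsTotallyCReflexive R C X)
    (hX₁ : IsTotallyCReflexive R C X₁) (hf : Function.Injective f) (hK : IsShortExact p q)
    (hr : Function.Surjective r) {θ : dualCokernel C (f ∘ₗ q) →ₗ[R] dualModule C X₂}
    (hθ : θ ∘ₗ (LinearMap.range (dualMap C (f ∘ₗ q))).mkQ = dualMap C (p ∘ₗ r))
    (h : dualCokernel C (f ∘ₗ q) →ₗ[R] C) : ∃ y : dualModule C X₂ →ₗ[R] C, y ∘ₗ θ = h := by
  obtain ⟨x, hfqx, hx⟩ := exists_bidualityMap_eq_comp_mkQ hX hX₁ h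
  obtain ⟨z, rfl⟩ := (hK.exact x).1 (hf (hfqx.trans (map_zero f).symm))
  obtain ⟨w, rfl⟩ := hr z
  refine ⟨bidualityMap R C X₂ w, Submodule.linearMap_qext _ ?_⟩
  rw [LinearMap.comp_assoc, hθ, ← hx]
  rfl

lemma subsingleton_ext_dualCokernel (hM : IsShortExact f g) (hX : IsTotallyCReflexive R C X)
    (hK : IsShortExact p q) (hX₁ : IsTotallyCReflexive R C X₁) (hr : Function.Surjective r)
    (hX₂ : IsExtAcyclic C (dualModule C X₂)) (hExt : Subsingleton (Abelian.Ext.{u} M C 1)) {k : ℕ}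
    (hT : ∀ i, 0 < i → i ≤ k → Subsingleton (Abelian.Ext.{u} (dualCokernel C (f ∘ₗ q)) C i))
    {i : ℕ} (hi : 0 < i) (hik : i ≤ k + 1) :
    Subsingleton (Abelian.Ext.{u} (dualCokernel C (p ∘ₗ r)) C i) := by
  obtain ⟨θ, hθ, hs⟩ := exists_isShortExact_dualCokernel hM hK hr hExt
  obtain _ | _ | i := i
  · exact absurd hi (lt_irrefl 0)
  · exact hs.subsingleton_ext_one (hX₂ 1 one_pos)
      (exists_extension_dualCokernel hX hX₁ hM.injective hK hr hθ)
  · exact hs.subsingleton_ext_from_right (hT (i + 1) i.succ_pos (by omega))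
      (hX₂ (i + 2) (by omega))

lemma subsingleton_ext_ext_of_dualCokernel {m k : ℕ} (h : IsShortExact f g)
    (hX : IsTotallyCReflexive R C X) (hK : gcdimLE R C m K)
    (hExt : ∀ i, 0 < i → i < m + 1 → Subsingleton (Abelian.Ext.{u} M C i))
    (hT : ∀ ⦃L X₁ : ModuleCat.{u} R⦄ ⦃p : L →ₗ[R] X₁⦄ ⦃q : X₁ →ₗ[R] K⦄, IsShortExact p q →
      IsTotallyCReflexive R C X₁ → ∀ i, 0 < i → i ≤ k →
        Subsingleton (Abelian.Ext.{u} (dualCokernel C (f ∘ₗ q)) C i))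
    {i : ℕ} (hi : i ≤ k + m) :
    Subsingleton (Abelian.Ext.{u} (ModuleCat.of R (Abelian.Ext.{u} M C (m + 1))) C i) := by
  induction m generalizing K X M k with
  | zero =>
    obtain ⟨e⟩ := h.nonempty_ext_one_equiv (hX.isExtAcyclic 1 one_pos)
    rw [← subsingleton_ext_congr_left (A := dualCokernel C f) e]
    obtain rfl | hi0 := i.eq_zero_or_pos
    · have := subsingleton_hom_dualCokernel hX hK h.injective
      exact (Abelian.Ext.homEquiv₀.trans ModuleCat.homEquiv).subsingleton
    · exact hT (isShortExact_subtype_ker (g := LinearMap.id) Function.surjective_id) hK i hi0 hi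
  | succ m ih =>
    obtain ⟨X₁, L, p, q, hs, hX₁, hL⟩ := gcdimLE_succ_iff.1 hK
    obtain ⟨e⟩ := h.nonempty_ext_equiv_ext_succ (hX.isExtAcyclic (m + 1) (by omega))
      (hX.isExtAcyclic (m + 2) (by omega))
    rw [← subsingleton_ext_congr_left (A := ModuleCat.of R (Abelian.Ext.{u} K C (m + 1))) e]
    refine ih (k := k + 1) hs hX₁ hL (fun i hi hi' => ?_) (fun L' X₂ p' r hr hX₂ i hi hik => ?_)
      (by omega)
    · exact h.subsingleton_ext_from_left (hX.isExtAcyclic i hi) (hExt (i + 1) i.succ_pos (by omega))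
    · exact subsingleton_ext_dualCokernel h hX hs hX₁ hr.surjective hX₂.isExtAcyclic_dualModule
        (hExt 1 one_pos (by omega)) (hT hs hX₁) hi hik

lemma gcdimLE.subsingleton_ext_ext {m : ℕ} (hM : gcdimLE R C (m + 1) M)
    (hExt : ∀ i, 0 < i → i < m + 1 → Subsingleton (Abelian.Ext.{u} M C i)) {i : ℕ}
    (hi : i < m + 1) :
    Subsingleton (Abelian.Ext.{u} (ModuleCat.of R (Abelian.Ext.{u} M C (m + 1))) C i) := by
  obtain ⟨X, K, f, g, h, hX, hK⟩ := gcdimLE_succ_iff.1 hM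
  exact subsingleton_ext_ext_of_dualCokernel (k := 0) h hX hK hExt
    (fun _ _ _ _ _ _ i hi hi' => absurd hi' (not_le.2 hi)) (by omega)

end DualityOfExt

section TransposeDepth

variable {R} {C M P₀ P₁ : ModuleCat.{u} R}

lemma exists_isShortExact_of_exact {d : P₁ →ₗ[R] P₀} {π : P₀ →ₗ[R] M} (h : Function.Exact d π)
    (hπ : Function.Surjective π) :
    ∃ (K N : ModuleCat.{u} R) (p : K →ₗ[R] P₁) (q : P₁ →ₗ[R] N) (f : N →ₗ[R] P₀),
      IsShortExact f π ∧ IsShortExact p q ∧ f ∘ₗ q = d := by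
  have hd (x : P₁) : d x ∈ LinearMap.ker π := h.apply_apply_eq_zero x
  have codRestrict_surjective : Function.Surjective (d.codRestrict (LinearMap.ker π) hd) :=
    fun ⟨y, hy⟩ => ((h y).1 hy).imp fun x hx => Subtype.ext hx
  exact ⟨_, ModuleCat.of R (LinearMap.ker π), _, _, _, isShortExact_subtype_ker hπ,
    isShortExact_subtype_ker codRestrict_surjective, LinearMap.subtype_comp_codRestrict _ _ _⟩

variable [IsLocalRing R] [IsNoetherianRing R]

lemma rdepth_dualCokernel_of_isExtAcyclic [Module.Finite R P₁] {d : P₁ →ₗ[R] P₀} {π : P₀ →ₗ[R] M}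
    (hP₀ : IsExtAcyclic C P₀) (hP₁ : IsExtAcyclic C P₁) (h : Function.Exact d π)
    (hπ : Function.Surjective π) (hM : ∀ i, 1 < i → Subsingleton (Abelian.Ext.{u} M C i))
    (hE : rdepth R (ModuleCat.of R (Abelian.Ext.{u} M C 1)) + 1 ≤ rdepth R C) :
    rdepth R (dualCokernel C d) = rdepth R (ModuleCat.of R (Abelian.Ext.{u} M C 1)) := by
  obtain ⟨K, N, p, q, f, hN, hK, rfl⟩ := exists_isShortExact_of_exact h hπ
  have := hK.finite_left
  have acyclic_N : IsExtAcyclic C N := fun i hi =>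
    hN.subsingleton_ext_from_left (hP₀ i hi) (hM (i + 1) (by omega))
  obtain ⟨s, t, hs⟩ := (hK.dual (acyclic_N 1 one_pos)).exists_isShortExact_quotient (dualMap C f)
  obtain ⟨e⟩ := hN.nonempty_ext_one_equiv (hP₀ 1 one_pos)
  have rdepth_E : rdepth R (ModuleCat.of R (Abelian.Ext.{u} M C 1)) = rdepth R (dualCokernel C f) :=
    rdepth_congr e.symm
  rw [rdepth_E] at hE ⊢
  simp only [rdepth_eq_extGrade] at hE ⊢
  exact hs.extGrade_middle_eq
    (hE.trans (extGrade_le_extGrade_dualModule (hK.isExtAcyclic_left hP₁ acyclic_N)))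

lemma rdepth_dualCokernel {m : ℕ} [Module.Finite R P₁] {d : P₁ →ₗ[R] P₀} {π : P₀ →ₗ[R] M}
    (hP₀ : IsExtAcyclic C P₀) (hP₁ : IsExtAcyclic C P₁) (h : Function.Exact d π)
    (hπ : Function.Surjective π)
    (hM : ∀ i, 0 < i → i ≠ m + 1 → Subsingleton (Abelian.Ext.{u} M C i))
    (hE : rdepth R (ModuleCat.of R (Abelian.Ext.{u} M C (m + 1))) + (m + 1) ≤ rdepth R C) :
    rdepth R (dualCokernel C d) =
      rdepth R (ModuleCat.of R (Abelian.Ext.{u} M C (m + 1))) + m := by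
  induction m generalizing M P₀ P₁ with
  | zero =>
    simpa using rdepth_dualCokernel_of_isExtAcyclic hP₀ hP₁ h hπ
      (fun i hi => hM i (by omega) (by omega)) (by simpa using hE)
  | succ m ih =>
    obtain ⟨K, N, p, q, f, hN, hK, rfl⟩ := exists_isShortExact_of_exact h hπ
    have := hK.finite_left
    obtain ⟨L, P₂, i, r, hr, -, _, _⟩ := exists_isShortExact_of_finite K
    have acyclic_P₂ := isExtAcyclic_of_projective C P₂
    have ext_N : ∀ i, 0 < i → i ≠ m + 1 → Subsingleton (Abelian.Ext.{u} N C i) := fun i hi him =>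
      hN.subsingleton_ext_from_left (hP₀ i hi) (hM (i + 1) i.succ_pos (by omega))
    have exact_presentation : Function.Exact (p ∘ₗ r) q :=
      hr.surjective.comp_exact_iff_exact.2 hK.exact
    obtain ⟨e⟩ := hN.nonempty_ext_equiv_ext_succ (hP₀ (m + 1) (by omega)) (hP₀ (m + 2) (by omega))
    obtain ⟨θ, -, hθ⟩ := exists_isShortExact_dualCokernel hN hK hr.surjective
      (hM 1 one_pos (by omega))
    have rdepth_E : rdepth R (ModuleCat.of R (Abelian.Ext.{u} M C (m + 1 + 1))) =
        rdepth R (ModuleCat.of R (Abelian.Ext.{u} N C (m + 1))) := rdepth_congr e.symm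
    rw [rdepth_E, Nat.cast_succ, ← add_assoc] at hE ⊢
    have hT := ih hP₁ acyclic_P₂ exact_presentation hK.surjective ext_N (le_self_add.trans hE)
    rw [← add_assoc, ← hT] at hE
    rw [← hT]
    simp only [rdepth_eq_extGrade] at hE ⊢
    exact hθ.extGrade_left_eq_of_right ((le_self_add.trans hE).trans
      (extGrade_le_extGrade_dualModule acyclic_P₂))

end TransposeDepth

section ReducedGCPerfect

variable {R} {C M : ModuleCat.{u} R}

namespace IsReducedGCPerfect

lemma subsingleton_ext (h : IsReducedGCPerfect R C M) {n : ℕ} (hn : gcdim R C M = n) {i : ℕ}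
    (hi : 0 < i) (hin : i ≠ n) : Subsingleton (Abelian.Ext.{u} M C i) := by
  obtain hlt | hgt := hin.lt_or_gt
  · by_contra hExt
    have : (n : ℕ∞) ≤ i := (h.2.trans hn).ge.trans
      (sInf_le ⟨i, ⟨hi, mt (subsingleton_extM_iff M C i).1 hExt⟩, rfl⟩)
    exact hlt.not_ge (Nat.cast_le.1 this)
  · exact (gcdimLE_of_gcdim_eq hn).subsingleton_ext hgt

lemma pos_and_not_subsingleton_ext (h : IsReducedGCPerfect R C M) {n : ℕ}
    (hn : gcdim R C M = n) : 0 < n ∧ ¬ Subsingleton (Abelian.Ext.{u} M C n) :=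
  (mem_of_sInf_image_natCast_eq (h.2.trans hn)).imp_right (mt (subsingleton_extM_iff M C n).2)

variable [IsLocalRing R] [IsNoetherianRing R] [Module.Finite R C]

lemma rdepth_ext_add_le (h : IsReducedGCPerfect R C M) {m : ℕ} (hm : gcdim R C M = (m + 1 : ℕ))
    (hdual : gcdim R C (dualModule C M) ≠ ⊤) :
    rdepth R (ModuleCat.of R (Abelian.Ext.{u} M C (m + 1))) + (m + 1) ≤ rdepth R C := by
  have hM := gcdimLE_of_gcdim_eq hm
  have ext_M : ∀ i, 0 < i → i < m + 1 → Subsingleton (Abelian.Ext.{u} M C i) := fun i hi hlt =>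
    h.subsingleton_ext hm hi hlt.ne
  have := not_subsingleton_iff_nontrivial.1 (h.pos_and_not_subsingleton_ext hm).2
  obtain ⟨a, ha⟩ := ENat.ne_top_iff_exists.1 hdual
  obtain ⟨b, hb, ext_b⟩ :=
    (hM.ext ext_M (gcdimLE_of_gcdim_eq ha.symm)).exists_not_subsingleton_ext
  have m_lt_b : m + 1 ≤ b := not_lt.1 fun hlt => ext_b (hM.subsingleton_ext_ext ext_M hlt)
  rw [← hb.rdepth_add ext_b]
  gcongr
  exact_mod_cast m_lt_b

end IsReducedGCPerfect

lemma IsSemidualizing.rdepth_eq [IsLocalRing R] [IsNoetherianRing R]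
    (hC : IsSemidualizing R C) : rdepth R (ModuleCat.of R R) = rdepth R C := by
  obtain ⟨_, homothety_bijective, hExt⟩ := hC
  have : Nontrivial C := not_subsingleton_iff_nontrivial.1 fun _ =>
    not_subsingleton R homothety_bijective.injective.subsingleton
  let homothety : R ≃ₗ[R] dualModule C C :=
    LinearEquiv.ofBijective (LinearMap.toSpanSingleton R _ LinearMap.id) homothety_bijective
  rw [rdepth_congr homothety,
    rdepth_dualModule fun i hi => (subsingleton_extM_iff C C i).1 (hExt i hi)]

end ReducedGCPerfect

theorem statement4_general [IsLocalRing R] [IsNoetherianRing R]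
    (C : ModuleCat.{u} R) [Module.Finite R C] (M : ModuleCat.{u} R)
    (n : ℕ) (hred : IsReducedGCPerfect R C M) (hdim : gcdim R C M = n)
    (hdual : gcdim R C (dualModule C M) ≠ ⊤) {P₁ P₀ : ModuleCat.{u} R} [Module.Finite R P₁]
    (hP₁ : IsExtAcyclic C P₁) (hP₀ : IsExtAcyclic C P₀) {d : P₁ →ₗ[R] P₀} {π : P₀ →ₗ[R] M}
    (hdπ : Function.Exact d π) (hπ : Function.Surjective π) :
    rdepth R M + rdepth R (dualCokernel C d) + 1 = rdepth R C + rdepth R (ExtM R M C n) := by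
  obtain ⟨hn, ext_n⟩ := hred.pos_and_not_subsingleton_ext hdim
  obtain ⟨m, rfl⟩ := Nat.exists_eq_succ_of_ne_zero hn.ne'
  obtain ⟨e⟩ := nonempty_extM_equiv M C (m + 1)
  have depth_ext : rdepth R (ExtM R M C (m + 1)) =
      rdepth R (ModuleCat.of R (Abelian.Ext.{u} M C (m + 1))) := rdepth_congr e
  have depth_M := (gcdimLE_of_gcdim_eq hdim).rdepth_add ext_n
  have depth_T := rdepth_dualCokernel hP₀ hP₁ hdπ hπ (fun i => hred.subsingleton_ext hdim)
    (hred.rdepth_ext_add_le hdim hdual)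
  rw [depth_ext, depth_T, ← depth_M]
  push_cast
  ring

/-- over a Noetherian local ring, if `M` is reduced `G_C`-perfect of
`G_C`-dimension `n` and `G_C-dim(M^C) < ∞`, then
`depth(M) + depth(Tr_C(M)) = depth(R) + depth(Ext_R^n(M,C)) - 1`
(stated additively in `ℕ∞`). -/
theorem statement4 [IsLocalRing R] [IsNoetherianRing R]
    (C : ModuleCat.{u} R) (hC : IsSemidualizing R C)
    (M : ModuleCat.{u} R) (hMfin : Module.Finite R ↥M)
    (n : ℕ) (hred : IsReducedGCPerfect R C M) (hdim : gcdim R C M = n)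
    (hdual : gcdim R C (ModuleCat.of R (↥M →ₗ[R] ↥C)) ≠ ⊤) :
    ∀ T : ModuleCat.{u} R, IsTransposeC R C M T →
      rdepth R M + rdepth R T + 1 =
        rdepth R (ModuleCat.of R R) + rdepth R (ExtM R M C n) := by
  rintro T ⟨P₁, P₀, d, π, ⟨_, _, ⟨_, hπ, -⟩, hdπ, _, -⟩, ⟨e⟩⟩
  have := hC.1
  rw [hC.rdepth_eq, rdepth_congr (B := dualCokernel C d) e]
  exact statement4_general R C M n hred hdim hdual (isExtAcyclic_of_projective C P₁)
    (isExtAcyclic_of_projective C P₀) (LinearMap.exact_iff.2 hdπ.symm) hπ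

end
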